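/- Let P ⊆ ℝ^d be a d-dimensional simplicial reflexive polytope and F a facet of P whose vertex set 𝒱(F) is a ℤ-basis of the lattice ℤ^d. Let v ∈ 𝒱(F) and suppose the neighboring vertex n(F,v) satisfies ⟨u_F, n(F,v)⟩ = 0. Then ⟨u_F^v, n(F,v)⟩ = −1. -/

import Mathlib

noncomputable section

/-- The standard inner product on `ℝ^d`. -/
def dotp {d : ℕ} (x y : Fin d → ℝ) : ℝ := ∑ i, x i * y i

/-- `x` is a point of the lattice `ℤ^d`. -/
def IsLP {d : ℕ} (x : Fin d → ℝ) : Prop := ∀ i, ∃ n : ℤ, x i = (n : ℝ)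

/-- A lattice polytope: convex hull of finitely many lattice points. -/
def IsLatticePolytope {d : ℕ} (P : Set (Fin d → ℝ)) : Prop :=
  ∃ V : Finset (Fin d → ℝ), (∀ v ∈ V, IsLP v) ∧ P = convexHull ℝ (V : Set (Fin d → ℝ))

/-- The dual polytope `P* = {x | ⟨x,y⟩ ≤ 1 ∀ y ∈ P}`. -/
def dualPolytope {d : ℕ} (P : Set (Fin d → ℝ)) : Set (Fin d → ℝ) :=
  {x | ∀ y ∈ P, dotp x y ≤ 1}

/-- `P` is a reflexive polytope: a (`d`-dimensional) lattice polytope with `0` in its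
interior whose dual is again a lattice polytope. -/
def IsReflexive {d : ℕ} (P : Set (Fin d → ℝ)) : Prop :=
  IsLatticePolytope P ∧ (0 : Fin d → ℝ) ∈ interior P ∧ IsLatticePolytope (dualPolytope P)

/-- `F` is a facet of `P` with (uniquely determined) outer normal `u`, normalized by
`⟨u, F⟩ = 1` (possible since `0` is in the interior of `P`). -/
def IsFacetNormal {d : ℕ} (P F : Set (Fin d → ℝ)) (u : Fin d → ℝ) : Prop :=
  F.Nonempty ∧ (∀ y ∈ P, dotp u y ≤ 1) ∧ F = {y ∈ P | dotp u y = 1} ∧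
    Module.finrank ℝ (vectorSpan ℝ F) = d - 1

/-- `F` is a facet of `P`. -/
def IsFacet {d : ℕ} (P F : Set (Fin d → ℝ)) : Prop := ∃ u, IsFacetNormal P F u

/-- `P` is simplicial: every facet has exactly `d` vertices. -/
def IsSimplicial {d : ℕ} (P : Set (Fin d → ℝ)) : Prop :=
  ∀ F, IsFacet P F → (Set.extremePoints ℝ F).ncard = d

/-- `F'` is the neighboring facet `N(F,w)`: a facet different from `F` containing all
vertices of `F` except `w`. -/
def NbrFacet {d : ℕ} (P F : Set (Fin d → ℝ)) (w : Fin d → ℝ) (F' : Set (Fin d → ℝ)) : Prop :=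
  IsFacet P F' ∧ F' ≠ F ∧ Set.extremePoints ℝ F \ {w} ⊆ F'

/-- `v'` is the neighboring vertex `n(F,w)`: the vertex of the neighboring facet `N(F,w)`
not contained in `F`. -/
def NbrVertex {d : ℕ} (P F : Set (Fin d → ℝ)) (w v' : Fin d → ℝ) : Prop :=
  ∃ F', NbrFacet P F w F' ∧ v' ∈ Set.extremePoints ℝ F' ∧ v' ∉ F

/-- The set `B` is a `ℤ`-basis of the lattice `ℤ^d`. -/
def IsZBasis {d : ℕ} (B : Set (Fin d → ℝ)) : Prop :=
  ∃ b : Fin d → (Fin d → ℝ), Function.Injective b ∧ Set.range b = B ∧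
    (∀ i, IsLP (b i)) ∧ ∀ x : Fin d → ℝ, IsLP x → ∃ c : Fin d → ℤ, x = ∑ i, (c i : ℝ) • b i

/-!
Let `v'` be a lattice point of the neighboring facet `F' = N(F,v)`, and `u'` the normal of `F'`.
On the vertices of `F` other than `v` both `u` and `u'` take the value `1`, so
`u' = u + (⟨u',v⟩ - 1) u_F^v`. If `⟨u,v'⟩ = 0`, pairing with `v'` gives
`1 = (⟨u',v⟩ - 1) ⟨u_F^v,v'⟩`. Both factors are integers: a facet normal is a vertex of the dual
polytope, hence a lattice point, and the dual basis of a lattice basis is integral. The first factor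
is at most `0` because `v ∈ P`, so both equal `-1`.
-/

section ConvexGeometry

theorem isExtreme_setOf_linearMap_eq {𝕜 E : Type*} [CommRing 𝕜] [LinearOrder 𝕜]
    [IsStrictOrderedRing 𝕜] [AddCommGroup E] [Module 𝕜 E] {A : Set E} {l : E →ₗ[𝕜] 𝕜} {a : 𝕜}
    (hle : ∀ x ∈ A, l x ≤ a) : IsExtreme 𝕜 A {x ∈ A | l x = a} := by
  refine ⟨fun x hx => hx.1, ?_⟩
  rintro x hx y hy _ ⟨-, hz⟩ ⟨s, t, hs, ht, hst, rfl⟩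
  refine ⟨hx, (hle x hx).eq_of_not_lt fun hlt => ?_⟩
  have hlt_self : a < a :=
    calc
      a = s * l x + t * l y := by simpa only [map_add, map_smul, smul_eq_mul] using hz.symm
      _ < s * a + t * a :=
        add_lt_add_of_lt_of_le (mul_lt_mul_of_pos_left hlt hs)
          (mul_le_mul_of_nonneg_left (hle y hy) ht.le)
      _ = a := by rw [← add_mul, hst, one_mul]
  exact hlt_self.false

theorem span_eq_top_of_linearMap_eq {K V : Type*} [Field K] [AddCommGroup V] [Module K V]
    [FiniteDimensional K V] {s : Set V} (hs : s.Nonempty) {l : V →ₗ[K] K} {a : K} (ha : a ≠ 0)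
    (hl : ∀ x ∈ s, l x = a)
    (hrank : Module.finrank K V ≤ Module.finrank K (vectorSpan K s) + 1) :
    Submodule.span K s = ⊤ := by
  obtain ⟨x, hx⟩ := hs
  have hle : vectorSpan K s ≤ Submodule.span K s := by
    rw [vectorSpan_def, Submodule.span_le]
    rintro _ ⟨y, hy, z, hz, rfl⟩
    exact sub_mem (Submodule.subset_span hy) (Submodule.subset_span hz)
  have hker : vectorSpan K s ≤ LinearMap.ker l := by
    rw [vectorSpan_def, Submodule.span_le]
    rintro _ ⟨y, hy, z, hz, rfl⟩
    simp [hl y hy, hl z hz]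
  have hx_notMem : x ∉ vectorSpan K s := fun hmem => ha ((hl x hx).symm.trans (hker hmem))
  have hlt : vectorSpan K s < Submodule.span K s :=
    lt_of_le_of_ne hle fun heq => hx_notMem (heq ▸ Submodule.subset_span hx)
  have hfinrank := Submodule.finrank_lt_finrank_of_lt hlt
  exact Submodule.eq_top_of_finrank_eq (le_antisymm (Submodule.finrank_le _) (by omega))

end ConvexGeometry

section InnerProduct

variable {d : ℕ} {x y : Fin d → ℝ}

theorem dotp_eq_dotProduct (x y : Fin d → ℝ) : dotp x y = x ⬝ᵥ y := rfl

theorem dotp_comm (x y : Fin d → ℝ) : dotp x y = dotp y x := dotProduct_comm x y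

theorem dotp_ext {B : Set (Fin d → ℝ)} (hB : Submodule.span ℝ B = ⊤)
    (h : ∀ w ∈ B, dotp x w = dotp y w) : x = y := by
  have heq : dotProductBilin ℝ ℝ x = dotProductBilin ℝ ℝ y := LinearMap.ext_on hB h
  exact dotProduct_eq x y (DFunLike.congr_fun heq)

theorem isExtreme_setOf_dotp_eq {A : Set (Fin d → ℝ)} {a : ℝ} (hle : ∀ y ∈ A, dotp x y ≤ a) :
    IsExtreme ℝ A {y ∈ A | dotp x y = a} :=
  isExtreme_setOf_linearMap_eq (l := dotProductBilin ℝ ℝ x) hle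

theorem eq_add_smul_of_dotp_eq {B : Set (Fin d → ℝ)} (hB : Submodule.span ℝ B = ⊤)
    {v z : Fin d → ℝ} (hzv : dotp z v = 1) (hz : ∀ w ∈ B, w ≠ v → dotp z w = 0)
    (hxy : ∀ w ∈ B, w ≠ v → dotp x w = dotp y w) :
    x = y + (dotp x v - dotp y v) • z := by
  refine dotp_ext hB fun w hw => ?_
  have hexpand : dotp (y + (dotp x v - dotp y v) • z) w =
      dotp y w + (dotp x v - dotp y v) * dotp z w := by
    simp only [dotp_eq_dotProduct, add_dotProduct, smul_dotProduct, smul_eq_mul]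
  rcases eq_or_ne w v with rfl | hwv
  · rw [hexpand, hzv]; ring
  · rw [hexpand, hz w hw hwv, hxy w hw hwv]; ring

end InnerProduct

section Lattice

variable {d : ℕ} {x y : Fin d → ℝ}

theorem isLP_single (i : Fin d) : IsLP (Pi.single i 1) := fun j =>
  ⟨Pi.single (M := fun _ => ℤ) i 1 j, by simp [Pi.single_apply]⟩

theorem IsLP.exists_int_dotp_eq (hx : IsLP x) (hy : IsLP y) : ∃ n : ℤ, dotp x y = n := by
  choose f hf using hx
  choose g hg using hy
  exact ⟨∑ i, f i * g i, by simp [dotp, hf, hg]⟩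

theorem IsLatticePolytope.isLP_of_mem_extremePoints {P : Set (Fin d → ℝ)}
    (hP : IsLatticePolytope P) (hx : x ∈ Set.extremePoints ℝ P) : IsLP x := by
  obtain ⟨V, hV, rfl⟩ := hP
  exact hV x (extremePoints_convexHull_subset hx)

namespace IsZBasis

variable {B : Set (Fin d → ℝ)}

theorem isLP_of_mem (hB : IsZBasis B) (hx : x ∈ B) : IsLP x := by
  obtain ⟨b, -, rfl, hb, -⟩ := hB
  obtain ⟨i, rfl⟩ := hx
  exact hb i

theorem span_eq_top (hB : IsZBasis B) : Submodule.span ℝ B = ⊤ := by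
  obtain ⟨b, -, rfl, -, hb⟩ := hB
  rw [eq_top_iff, ← (Pi.basisFun ℝ (Fin d)).span_eq, Submodule.span_le]
  rintro _ ⟨i, rfl⟩
  obtain ⟨c, hc⟩ := hb _ (isLP_single i)
  rw [Pi.basisFun_apply, hc]
  exact Submodule.sum_smul_mem _ _ fun j _ => Submodule.subset_span ⟨j, rfl⟩

theorem isLP_of_forall_exists_int_dotp_eq (hB : IsZBasis B)
    (hx : ∀ w ∈ B, ∃ n : ℤ, dotp x w = n) : IsLP x := by
  obtain ⟨b, -, rfl, -, hb⟩ := hB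
  choose n hn using fun i => hx (b i) ⟨i, rfl⟩
  intro j
  obtain ⟨c, hc⟩ := hb _ (isLP_single j)
  refine ⟨∑ i, c i * n i, ?_⟩
  calc
    x j = x ⬝ᵥ Pi.single j 1 := (dotProduct_single_one x j).symm
    _ = ∑ i, (c i : ℝ) * dotp x (b i) := by
      simp only [hc, dotProduct_sum, dotProduct_smul, smul_eq_mul, dotp_eq_dotProduct]
    _ = ((∑ i, c i * n i : ℤ) : ℝ) := by simp only [hn]; push_cast; rfl

theorem isLP_of_dotp_eq_one_of_dotp_eq_zero (hB : IsZBasis B) {v : Fin d → ℝ}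
    (hxv : dotp x v = 1) (hx : ∀ w ∈ B, w ≠ v → dotp x w = 0) : IsLP x := by
  refine hB.isLP_of_forall_exists_int_dotp_eq fun w hw => ?_
  rcases eq_or_ne w v with rfl | hwv
  · exact ⟨1, by rw [hxv, Int.cast_one]⟩
  · exact ⟨0, by rw [hx w hw hwv, Int.cast_zero]⟩

end IsZBasis

end Lattice

section Facets

variable {d : ℕ} {P F : Set (Fin d → ℝ)} {u : Fin d → ℝ}

namespace IsFacetNormal

theorem isExtreme (hF : IsFacetNormal P F u) : IsExtreme ℝ P F := by
  obtain ⟨-, hle, rfl, -⟩ := hF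
  exact isExtreme_setOf_dotp_eq hle

theorem dotp_eq_one (hF : IsFacetNormal P F u) {x : Fin d → ℝ} (hx : x ∈ F) : dotp u x = 1 := by
  obtain ⟨-, -, rfl, -⟩ := hF
  exact hx.2

theorem span_eq_top (hF : IsFacetNormal P F u) : Submodule.span ℝ F = ⊤ := by
  refine span_eq_top_of_linearMap_eq (l := dotProductBilin ℝ ℝ u) hF.1 one_ne_zero
    (fun x hx => hF.dotp_eq_one hx) ?_
  rw [hF.2.2.2, Module.finrank_fin_fun]
  omega

theorem mem_extremePoints_dualPolytope (hF : IsFacetNormal P F u) :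
    u ∈ Set.extremePoints ℝ (dualPolytope P) := by
  refine mem_extremePoints_iff_left.2 ⟨hF.2.1, fun x hx y hy hu => ?_⟩
  refine dotp_ext hF.span_eq_top fun z hz => ?_
  have hface : IsExtreme ℝ (dualPolytope P) {w ∈ dualPolytope P | dotp z w = 1} :=
    isExtreme_setOf_dotp_eq fun w hw => dotp_comm z w ▸ hw z (hF.isExtreme.subset hz)
  have hzu : dotp z u = 1 := (dotp_comm z u).trans (hF.dotp_eq_one hz)
  have hzx : dotp z x = 1 := (hface.left_mem_of_mem_openSegment hx hy ⟨hF.2.1, hzu⟩ hu).2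
  rw [dotp_comm x, dotp_comm u, hzx, hzu]

end IsFacetNormal

theorem IsFacet.isExtreme (hF : IsFacet P F) : IsExtreme ℝ P F :=
  hF.elim fun _ hu => hu.isExtreme

end Facets

theorem stmt9_general {d : ℕ} {P F F' : Set (Fin d → ℝ)} {u v uv v' : Fin d → ℝ}
    (hP : IsLatticePolytope (dualPolytope P)) (hF : IsFacetNormal P F u)
    (hbasis : IsZBasis (Set.extremePoints ℝ F)) (hv : v ∈ Set.extremePoints ℝ F)
    (huv1 : dotp uv v = 1) (huv0 : ∀ w ∈ Set.extremePoints ℝ F, w ≠ v → dotp uv w = 0)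
    (hF' : NbrFacet P F v F') (hv'F' : v' ∈ F') (hv' : IsLP v') (h0 : dotp u v' = 0) :
    dotp uv v' = -1 := by
  obtain ⟨⟨u', hu'⟩, -, hsub⟩ := hF'
  have hnormal : u' = u + (dotp u' v - dotp u v) • uv :=
    eq_add_smul_of_dotp_eq hbasis.span_eq_top huv1 huv0 fun w hw hwv =>
      (hu'.dotp_eq_one (hsub ⟨hw, hwv⟩)).trans (hF.dotp_eq_one hw.1).symm
  have hmul : (dotp u' v - 1) * dotp uv v' = 1 := by
    have hpair := congrArg (dotp · v') hnormal
    simp only [dotp_eq_dotProduct, add_dotProduct, smul_dotProduct, smul_eq_mul] at hpair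
    simp only [← dotp_eq_dotProduct, h0, hu'.dotp_eq_one hv'F', hF.dotp_eq_one hv.1] at hpair
    linarith
  have huvLP : IsLP uv := hbasis.isLP_of_dotp_eq_one_of_dotp_eq_zero huv1 huv0
  have hu'LP : IsLP u' := hP.isLP_of_mem_extremePoints hu'.mem_extremePoints_dualPolytope
  obtain ⟨m, hm⟩ : ∃ m : ℤ, dotp u' v = m := hu'LP.exists_int_dotp_eq (hbasis.isLP_of_mem hv)
  obtain ⟨k, hk⟩ : ∃ k : ℤ, dotp uv v' = k := huvLP.exists_int_dotp_eq hv'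
  have hle : dotp u' v ≤ 1 := hu'.2.1 v (hF.isExtreme.subset hv.1)
  rw [hm, hk] at hmul
  rw [hm] at hle
  norm_cast at hmul hle
  rcases Int.mul_eq_one_iff_eq_one_or_neg_one.1 hmul with ⟨hm1, -⟩ | ⟨-, hk1⟩
  · omega
  · rw [hk, hk1]; norm_num

/-- if the vertex set of a facet `F` is a `ℤ`-basis of `ℤ^d`, `v ∈ 𝒱(F)`, and
the neighboring vertex `v' = n(F,v)` satisfies `⟨u_F, v'⟩ = 0`, then `⟨u_F^v, v'⟩ = -1`. -/
theorem stmt9 {d : ℕ} (P : Set (Fin d → ℝ)) (hP : IsReflexive P) (hs : IsSimplicial P)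
    (F : Set (Fin d → ℝ)) (u : Fin d → ℝ) (hF : IsFacetNormal P F u)
    (hbasis : IsZBasis (Set.extremePoints ℝ F))
    (v : Fin d → ℝ) (hv : v ∈ Set.extremePoints ℝ F)
    (uv : Fin d → ℝ) (huv1 : dotp uv v = 1)
    (huv0 : ∀ w ∈ Set.extremePoints ℝ F, w ≠ v → dotp uv w = 0)
    (v' : Fin d → ℝ) (hv' : NbrVertex P F v v')
    (h0 : dotp u v' = 0) :
    dotp uv v' = -1 := by
  obtain ⟨F', hF', hv'ext, -⟩ := hv'
  exact stmt9_general hP.2.2 hF hbasis hv huv1 huv0 hF' hv'ext.1 (hP.1.isLP_of_mem_extremePoints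
    (hF'.1.isExtreme.extremePoints_subset_extremePoints hv'ext)) h0
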